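/- The following three conditions are equivalent: (a) ∇(B) ⊆ B + z⁻¹B; (a′) ∇(B) ⊆ B[z⁻¹], the span of {z⁻ʲ·b : j ≥ 0, b ∈ B}; (b) ∇(L) ⊆ L. -/

import Mathlib

/-!
Setting: `V` a finite-dimensional complex vector space.  We model the space of
formal Laurent series `V((z))` (finitely many negative powers) as
`HahnModule ℤ ℂ V`, which is a module over `ℂ((z)) = LaurentSeries ℂ` and over `ℂ`.
`V[[z]]` is the ℂ-subspace of series with no negative-power coefficients.
-/

open HahnModule

noncomputable section

variable (V : Type*) [AddCommGroup V] [Module ℂ V]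

/-- Multiplication by the scalar `c ∈ ℂ` commutes with multiplication by Laurent series. -/
instance hmSMulCommClass : SMulCommClass ℂ (LaurentSeries ℂ) (HahnModule ℤ ℂ V) where
  smul_comm c P m := by
    have hcs : ∀ x : HahnModule ℤ ℂ V, (of ℂ).symm (c • x) = c • (of ℂ).symm x := fun _ => rfl
    have hsub : ((of ℂ).symm (c • m)).support ⊆ ((of ℂ).symm m).support := by
      intro j hj
      rw [HahnSeries.mem_support] at hj ⊢
      rw [hcs, HahnSeries.coeff_smul] at hj
      intro h
      rw [h, smul_zero] at hj
      exact hj rfl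
    apply (of ℂ).symm.injective
    ext a
    rw [hcs, HahnSeries.coeff_smul, HahnModule.coeff_smul,
      HahnModule.coeff_smul_right ((of ℂ).symm m).isPWO_support hsub, Finset.smul_sum]
    exact Finset.sum_congr rfl fun ij _ => by rw [hcs, HahnSeries.coeff_smul, smul_comm]

/-- Multiplication by `z^k` (`k ∈ ℤ`) as a `ℂ`-linear endomorphism of `V((z))`. -/
def zpowMul (k : ℤ) : HahnModule ℤ ℂ V →ₗ[ℂ] HahnModule ℤ ℂ V where
  toFun m := (HahnSeries.single k (1 : ℂ) : LaurentSeries ℂ) • m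
  map_add' x y := _root_.smul_add _ x y
  map_smul' c m := (smul_comm c _ m).symm

/-- `V[[z]] ⊆ V((z))`: the ℂ-subspace of series with vanishing coefficients in
negative degrees. -/
def posPart : Submodule ℂ (HahnModule ℤ ℂ V) where
  carrier := {f | ∀ n : ℤ, n < 0 → ((of ℂ).symm f).coeff n = 0}
  zero_mem' := fun n _ => rfl
  add_mem' := by
    intro a b ha hb n hn
    rw [of_symm_add, HahnSeries.coeff_add, ha n hn, hb n hn, add_zero]
  smul_mem' := by
    intro c f hf n hn
    have : (of ℂ).symm (c • f) = c • (of ℂ).symm f := rfl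
    rw [this, HahnSeries.coeff_smul, hf n hn, smul_zero]

/-- The constant-term map `V((z)) → V`, `f ↦ f(0)` (the coefficient of `z⁰`). -/
def constTerm : HahnModule ℤ ℂ V →ₗ[ℂ] V where
  toFun f := ((of ℂ).symm f).coeff 0
  map_add' x y := by
    show ((of ℂ).symm (x + y)).coeff 0 = ((of ℂ).symm x).coeff 0 + ((of ℂ).symm y).coeff 0
    rw [of_symm_add, HahnSeries.coeff_add]
  map_smul' c f := by
    show ((of ℂ).symm (c • f)).coeff 0 = c • ((of ℂ).symm f).coeff 0
    have : (of ℂ).symm (c • f) = c • (of ℂ).symm f := rfl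
    rw [this, HahnSeries.coeff_smul]

variable {V}

/-- A *section* of `V[[z]]`: a ℂ-subspace `B ⊆ V[[z]]` such that the constant-term
map `B → V` is a ℂ-linear isomorphism (i.e. bijective). -/
def IsSection (B : Submodule ℂ (HahnModule ℤ ℂ V)) : Prop :=
  B ≤ posPart V ∧ Function.Bijective ⇑((constTerm V).comp B.subtype)

/-- An *opposite filtration* of `V((z))`: a ℂ-subspace `L` with
`V((z)) = V[[z]] ⊕ L` and `L ⊆ z·L`. -/
def IsOppositeFiltration (L : Submodule ℂ (HahnModule ℤ ℂ V)) : Prop :=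
  IsCompl (posPart V) L ∧ L ≤ L.map (zpowMul V 1)

/-- The section `V[[z]] ∩ z·L` attached to an opposite filtration `L`. -/
def sectionOf (L : Submodule ℂ (HahnModule ℤ ℂ V)) : Submodule ℂ (HahnModule ℤ ℂ V) :=
  posPart V ⊓ L.map (zpowMul V 1)

/-- The opposite filtration `z⁻¹B[z⁻¹]`, the ℂ-linear span of `{z⁻ʲ·b : j ≥ 1, b ∈ B}`,
attached to a section `B`. -/
def oppositeOf (B : Submodule ℂ (HahnModule ℤ ℂ V)) : Submodule ℂ (HahnModule ℤ ℂ V) :=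
  Submodule.span ℂ {x | ∃ j : ℕ, 1 ≤ j ∧ ∃ b ∈ B, x = zpowMul V (-(j : ℤ)) b}

/-- The derivation `z·d/dz` acting coefficientwise on `ℂ((z))`:
`zⁿ ↦ n·zⁿ`. -/
def zDz (P : LaurentSeries ℂ) : LaurentSeries ℂ where
  coeff n := (n : ℤ) • P.coeff n
  isPWO_support' := P.isPWO_support.mono (by
    intro n hn
    rw [Function.mem_support] at hn
    rw [HahnSeries.mem_support]
    intro h
    rw [h, smul_zero] at hn
    exact hn rfl)

/-!
Multiplication by `z^k` shifts the decreasing filtration `z^k V[[z]]` and, as `L ⊆ zL`, the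
increasing filtration `z^k L`. Since `V((z)) = V[[z]] + L`, the modular law gives
`z⁻ⁿ⁻¹V[[z]] ∩ zL = (z⁻ⁿV[[z]] ∩ zL) + z⁻ⁿ⁻¹B` for `n ≥ 0`. For `n = 0` this reads
`B + z⁻¹B = z⁻¹V[[z]] ∩ zL`, and by induction on `n` it yields `B[z⁻¹] = zL`. As
`∇B ⊆ z⁻¹V[[z]]`, conditions (a) and (a′) both say that `∇B ⊆ zL`. The Leibniz rule shows that `∇`
commutes with multiplication by `z^k` up to a multiple of `z^k`, so `∇B ⊆ zL` propagates to
`∇(zL) ⊆ zL`, which is (b) multiplied by `z`.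
-/

theorem inf_sup_inf_eq_of_codisjoint {α : Type*} [Lattice α] [OrderTop α] [IsModularLattice α]
    {a a' c c' : α} (ha : a ≤ a') (hc : c ≤ c') (hac : Codisjoint a c) :
    a ⊓ c' ⊔ a' ⊓ c = a' ⊓ c' :=
  calc
    a ⊓ c' ⊔ a' ⊓ c = a' ⊓ c ⊔ a ⊓ c' := sup_comm _ _
    _ = a' ⊓ (c ⊔ a ⊓ c') := inf_sup_assoc_of_le c (inf_le_left.trans ha)
    _ = a' ⊓ ((c ⊔ a) ⊓ c') := by rw [sup_inf_assoc_of_le a hc]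
    _ = a' ⊓ c' := by rw [hac.symm.eq_top, top_inf_eq]

section Shift

theorem zpowMul_apply (k : ℤ) (m : HahnModule ℤ ℂ V) :
    zpowMul V k m = (HahnSeries.single k (1 : ℂ) : LaurentSeries ℂ) • m :=
  rfl

theorem zpowMul_zero (m : HahnModule ℤ ℂ V) : zpowMul V 0 m = m :=
  one_smul (LaurentSeries ℂ) m

theorem zpowMul_zpowMul (j k : ℤ) (m : HahnModule ℤ ℂ V) :
    zpowMul V j (zpowMul V k m) = zpowMul V (j + k) m := by
  refine (mul_smul (HahnSeries.single j (1 : ℂ)) (HahnSeries.single k (1 : ℂ)) m).symm.trans ?_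
  rw [HahnSeries.single_mul_single, one_mul, ← zpowMul_apply]

theorem coeff_zpowMul (k n : ℤ) (m : HahnModule ℤ ℂ V) :
    ((of ℂ).symm (zpowMul V k m)).coeff n = ((of ℂ).symm m).coeff (n - k) := by
  simpa [zpowMul_apply] using
    coeff_single_smul_vadd (r := (1 : ℂ)) (x := m) (a := n - k) (b := k)

theorem zpowMul_bijective (k : ℤ) : Function.Bijective (zpowMul V k) :=
  Function.bijective_iff_has_inverse.2 ⟨zpowMul V (-k),
    fun m => by rw [zpowMul_zpowMul, neg_add_cancel, zpowMul_zero],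
    fun m => by rw [zpowMul_zpowMul, add_neg_cancel, zpowMul_zero]⟩

variable (S : Submodule ℂ (HahnModule ℤ ℂ V))

theorem mem_map_zpowMul {k : ℤ} {m : HahnModule ℤ ℂ V} :
    m ∈ S.map (zpowMul V k) ↔ zpowMul V (-k) m ∈ S := by
  refine ⟨?_, fun hm => ⟨_, hm, by rw [zpowMul_zpowMul, add_neg_cancel, zpowMul_zero]⟩⟩
  rintro ⟨x, hx, rfl⟩
  rwa [zpowMul_zpowMul, neg_add_cancel, zpowMul_zero]

theorem map_zpowMul_zero : S.map (zpowMul V 0) = S := by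
  ext m
  rw [mem_map_zpowMul, neg_zero, zpowMul_zero]

theorem map_zpowMul_map_zpowMul (j k : ℤ) :
    (S.map (zpowMul V k)).map (zpowMul V j) = S.map (zpowMul V (j + k)) := by
  rw [← Submodule.map_comp]
  congr 1
  exact LinearMap.ext (zpowMul_zpowMul j k)

theorem map_zpowMul_monotone {L : Submodule ℂ (HahnModule ℤ ℂ V)}
    (hzL : L ≤ L.map (zpowMul V 1)) : Monotone fun k : ℤ => L.map (zpowMul V k) :=
  monotone_int_of_le_succ fun k => by
    simpa only [map_zpowMul_map_zpowMul] using Submodule.map_mono (f := zpowMul V k) hzL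

theorem codisjoint_map_zpowMul {S T : Submodule ℂ (HahnModule ℤ ℂ V)} (h : Codisjoint S T)
    (k : ℤ) : Codisjoint (S.map (zpowMul V k)) (T.map (zpowMul V k)) := by
  rw [codisjoint_iff, ← Submodule.map_sup, h.eq_top, Submodule.map_top,
    LinearMap.range_eq_top.2 (zpowMul_bijective k).surjective]

end Shift

theorem mem_posPart {m : HahnModule ℤ ℂ V} :
    m ∈ posPart V ↔ ∀ n < 0, ((of ℂ).symm m).coeff n = 0 :=
  Iff.rfl

theorem mem_map_zpowMul_posPart {k : ℤ} {m : HahnModule ℤ ℂ V} :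
    m ∈ (posPart V).map (zpowMul V k) ↔ ∀ n < k, ((of ℂ).symm m).coeff n = 0 := by
  simp only [mem_map_zpowMul, mem_posPart, coeff_zpowMul]
  exact ⟨fun h n hn => by simpa using h (n - k) (by lia), fun h n hn => h _ (by lia)⟩

theorem map_zpowMul_posPart_antitone : Antitone fun k : ℤ => (posPart V).map (zpowMul V k) :=
  fun _ _ hjk _ hm => mem_map_zpowMul_posPart.2 fun n hn =>
    mem_map_zpowMul_posPart.1 hm n (hn.trans_le hjk)

theorem exists_mem_map_zpowMul_neg_posPart (m : HahnModule ℤ ℂ V) :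
    ∃ n : ℕ, m ∈ (posPart V).map (zpowMul V (-n)) := by
  refine ⟨((of ℂ).symm m).order.natAbs, mem_map_zpowMul_posPart.2 fun n hn => ?_⟩
  exact HahnSeries.coeff_eq_zero_of_lt_order (by lia)

/-- `B[z⁻¹]`, the polynomials in `z⁻¹` with coefficients in `B`, encoded as the ℂ-span of the
monomials `z⁻ʲ·b`. -/
def adjoinZInv (B : Submodule ℂ (HahnModule ℤ ℂ V)) : Submodule ℂ (HahnModule ℤ ℂ V) :=
  Submodule.span ℂ {x | ∃ j : ℕ, ∃ b ∈ B, x = zpowMul V (-(j : ℤ)) b}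

theorem adjoinZInv_eq_iSup (B : Submodule ℂ (HahnModule ℤ ℂ V)) :
    adjoinZInv B = ⨆ j : ℕ, B.map (zpowMul V (-j)) := by
  refine le_antisymm (Submodule.span_le.2 ?_) (iSup_le fun j => ?_)
  · rintro _ ⟨j, b, hb, rfl⟩
    exact Submodule.mem_iSup_of_mem j (Submodule.mem_map_of_mem hb)
  · rintro _ ⟨b, hb, rfl⟩
    exact Submodule.subset_span ⟨j, b, hb, rfl⟩

theorem map_zpowMul_neg_le_adjoinZInv (B : Submodule ℂ (HahnModule ℤ ℂ V)) (j : ℕ) :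
    B.map (zpowMul V (-j)) ≤ adjoinZInv B :=
  (le_iSup (fun j : ℕ => B.map (zpowMul V (-j))) j).trans_eq (adjoinZInv_eq_iSup B).symm

theorem le_adjoinZInv (B : Submodule ℂ (HahnModule ℤ ℂ V)) : B ≤ adjoinZInv B := by
  simpa [map_zpowMul_zero] using map_zpowMul_neg_le_adjoinZInv B 0

theorem map_zpowMul_neg_adjoinZInv_le (B : Submodule ℂ (HahnModule ℤ ℂ V)) (j : ℕ) :
    (adjoinZInv B).map (zpowMul V (-j)) ≤ adjoinZInv B := by
  rw [adjoinZInv_eq_iSup B, Submodule.map_iSup, ← adjoinZInv_eq_iSup B]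
  refine iSup_le fun i => ?_
  rw [map_zpowMul_map_zpowMul, show (-j + -i : ℤ) = -(j + i : ℕ) by lia]
  exact map_zpowMul_neg_le_adjoinZInv B (j + i)

section SectionOf

variable {L : Submodule ℂ (HahnModule ℤ ℂ V)}

theorem map_zpowMul_sectionOf (L : Submodule ℂ (HahnModule ℤ ℂ V)) (k : ℤ) :
    (sectionOf L).map (zpowMul V k) =
      (posPart V).map (zpowMul V k) ⊓ L.map (zpowMul V (k + 1)) := by
  rw [sectionOf, Submodule.map_inf _ (zpowMul_bijective k).injective, map_zpowMul_map_zpowMul]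

theorem map_zpowMul_posPart_inf_sup_map_sectionOf (hL : Codisjoint (posPart V) L)
    (hzL : L ≤ L.map (zpowMul V 1)) {k : ℤ} (hk : k ≤ 0) :
    (posPart V).map (zpowMul V (k + 1)) ⊓ L.map (zpowMul V 1) ⊔ (sectionOf L).map (zpowMul V k) =
      (posPart V).map (zpowMul V k) ⊓ L.map (zpowMul V 1) := by
  rw [map_zpowMul_sectionOf]
  exact inf_sup_inf_eq_of_codisjoint (map_zpowMul_posPart_antitone (by lia))
    (map_zpowMul_monotone hzL (by lia)) (codisjoint_map_zpowMul hL (k + 1))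

theorem sectionOf_sup_map_zpowMul_neg_one (hL : Codisjoint (posPart V) L)
    (hzL : L ≤ L.map (zpowMul V 1)) :
    sectionOf L ⊔ (sectionOf L).map (zpowMul V (-1)) =
      (posPart V).map (zpowMul V (-1)) ⊓ L.map (zpowMul V 1) := by
  rw [← map_zpowMul_posPart_inf_sup_map_sectionOf hL hzL (by lia), neg_add_cancel,
    map_zpowMul_zero, ← sectionOf]

theorem map_zpowMul_neg_posPart_inf_le_adjoinZInv (hL : Codisjoint (posPart V) L)
    (hzL : L ≤ L.map (zpowMul V 1)) (n : ℕ) :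
    (posPart V).map (zpowMul V (-n)) ⊓ L.map (zpowMul V 1) ≤ adjoinZInv (sectionOf L) := by
  induction n with
  | zero => simpa [map_zpowMul_zero, sectionOf] using le_adjoinZInv (sectionOf L)
  | succ n ih =>
    rw [← map_zpowMul_posPart_inf_sup_map_sectionOf hL hzL (by lia),
      show -((n + 1 : ℕ) : ℤ) + 1 = -n by lia]
    exact sup_le ih (map_zpowMul_neg_le_adjoinZInv _ (n + 1))

theorem adjoinZInv_sectionOf (hL : Codisjoint (posPart V) L) (hzL : L ≤ L.map (zpowMul V 1)) :
    adjoinZInv (sectionOf L) = L.map (zpowMul V 1) := by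
  apply le_antisymm
  · rw [adjoinZInv_eq_iSup]
    refine iSup_le fun j => ?_
    rw [map_zpowMul_sectionOf]
    exact inf_le_right.trans (map_zpowMul_monotone hzL (by lia))
  · intro m hm
    obtain ⟨n, hn⟩ := exists_mem_map_zpowMul_neg_posPart m
    exact map_zpowMul_neg_posPart_inf_le_adjoinZInv hL hzL n ⟨hn, hm⟩

end SectionOf

theorem zDz_single (k : ℤ) (c : ℂ) :
    zDz (HahnSeries.single k c) = k • HahnSeries.single k c := by
  ext n
  obtain rfl | hn := eq_or_ne n k
  · simp only [zDz, HahnSeries.coeff_smul]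
  · simp only [zDz, HahnSeries.coeff_smul, HahnSeries.coeff_single_of_ne hn, smul_zero]

/-- A covariant derivative on `V((z))` in the direction `z∂z`: a ℂ-linear map satisfying the
Leibniz rule over `ℂ((z))`. -/
def IsCovariantDerivative (nabla : HahnModule ℤ ℂ V →ₗ[ℂ] HahnModule ℤ ℂ V) : Prop :=
  ∀ (P : LaurentSeries ℂ) (m : HahnModule ℤ ℂ V), nabla (P • m) = zDz P • m + P • nabla m

namespace IsCovariantDerivative

variable {nabla : HahnModule ℤ ℂ V →ₗ[ℂ] HahnModule ℤ ℂ V}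

theorem apply_zpowMul (hnabla : IsCovariantDerivative nabla) (k : ℤ) (m : HahnModule ℤ ℂ V) :
    nabla (zpowMul V k m) = k • zpowMul V k m + zpowMul V k (nabla m) := by
  rw [zpowMul_apply, hnabla, zDz_single, smul_assoc, zpowMul_apply]

theorem map_zpowMul_le_comap (hnabla : IsCovariantDerivative nabla)
    {S T : Submodule ℂ (HahnModule ℤ ℂ V)} (hST : S ≤ T) (hS : S ≤ T.comap nabla) (k : ℤ) :
    S.map (zpowMul V k) ≤ (T.map (zpowMul V k)).comap nabla := by
  rintro _ ⟨m, hm, rfl⟩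
  rw [Submodule.mem_comap, hnabla.apply_zpowMul]
  exact add_mem (zsmul_mem (Submodule.mem_map_of_mem (hST hm)) k)
    (Submodule.mem_map_of_mem (hS hm))

theorem map_zpowMul_le_comap_iff (hnabla : IsCovariantDerivative nabla)
    (L : Submodule ℂ (HahnModule ℤ ℂ V)) (k : ℤ) :
    L.map (zpowMul V k) ≤ (L.map (zpowMul V k)).comap nabla ↔ L ≤ L.comap nabla := by
  refine ⟨fun h => ?_, fun h => hnabla.map_zpowMul_le_comap le_rfl h k⟩
  simpa only [map_zpowMul_map_zpowMul, neg_add_cancel, map_zpowMul_zero] using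
    hnabla.map_zpowMul_le_comap le_rfl h (-k)

theorem adjoinZInv_le_comap_iff (hnabla : IsCovariantDerivative nabla)
    (B : Submodule ℂ (HahnModule ℤ ℂ V)) :
    adjoinZInv B ≤ (adjoinZInv B).comap nabla ↔ B ≤ (adjoinZInv B).comap nabla := by
  refine ⟨(le_adjoinZInv B).trans, fun h => (adjoinZInv_eq_iSup B).le.trans (iSup_le fun j => ?_)⟩
  exact (hnabla.map_zpowMul_le_comap (le_adjoinZInv B) h (-j)).trans
    (Submodule.comap_mono (map_zpowMul_neg_adjoinZInv_le B j))

end IsCovariantDerivative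

theorem zdz_stability_general {nabla : HahnModule ℤ ℂ V →ₗ[ℂ] HahnModule ℤ ℂ V}
    (hnabla : IsCovariantDerivative nabla)
    (hpos : ∀ m ∈ posPart V, nabla m ∈ (posPart V).map (zpowMul V (-1)))
    {L : Submodule ℂ (HahnModule ℤ ℂ V)} (hL : Codisjoint (posPart V) L)
    (hzL : L ≤ L.map (zpowMul V 1)) :
    ((∀ b ∈ sectionOf L, nabla b ∈ sectionOf L ⊔ (sectionOf L).map (zpowMul V (-1))) ↔
      (∀ b ∈ sectionOf L, nabla b ∈ adjoinZInv (sectionOf L))) ∧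
    ((∀ b ∈ sectionOf L, nabla b ∈ sectionOf L ⊔ (sectionOf L).map (zpowMul V (-1))) ↔
      (∀ l ∈ L, nabla l ∈ L)) := by
  have sup_iff_adjoin :
      (∀ b ∈ sectionOf L, nabla b ∈ sectionOf L ⊔ (sectionOf L).map (zpowMul V (-1))) ↔
        (∀ b ∈ sectionOf L, nabla b ∈ adjoinZInv (sectionOf L)) := by
    rw [sectionOf_sup_map_zpowMul_neg_one hL hzL, adjoinZInv_sectionOf hL hzL]
    exact forall₂_congr fun b hb => and_iff_right (hpos b hb.1)
  have adjoin_iff_stable :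
      (∀ b ∈ sectionOf L, nabla b ∈ adjoinZInv (sectionOf L)) ↔ ∀ l ∈ L, nabla l ∈ L := by
    have h := hnabla.adjoinZInv_le_comap_iff (sectionOf L)
    rw [adjoinZInv_sectionOf hL hzL, hnabla.map_zpowMul_le_comap_iff L 1] at h
    rw [adjoinZInv_sectionOf hL hzL]
    exact h.symm
  exact ⟨sup_iff_adjoin, sup_iff_adjoin.trans adjoin_iff_stable⟩

/-- For a covariant derivative `∇` in the direction `z∂z`
(a ℂ-linear endomorphism of `V((z))` satisfying the Leibniz rule
`∇(P·m) = (z dP/dz)·m + P·∇m` and `∇(V[[z]]) ⊆ z⁻¹V[[z]]`), and an opposite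
filtration `L` with associated section `B = V[[z]] ∩ z·L`, the following are
equivalent: (a) `∇(B) ⊆ B + z⁻¹B`; (a′) `∇(B) ⊆ B[z⁻¹]`; (b) `∇(L) ⊆ L`. -/
theorem zdz_stability
    (V : Type*) [AddCommGroup V] [Module ℂ V] [FiniteDimensional ℂ V]
    (nabla : HahnModule ℤ ℂ V →ₗ[ℂ] HahnModule ℤ ℂ V)
    (hLeib : ∀ (P : LaurentSeries ℂ) (m : HahnModule ℤ ℂ V),
      nabla (P • m) = zDz P • m + P • nabla m)
    (hpos : ∀ m ∈ posPart V, nabla m ∈ (posPart V).map (zpowMul V (-1)))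
    (L : Submodule ℂ (HahnModule ℤ ℂ V)) (hL : IsOppositeFiltration L) :
    ((∀ b ∈ sectionOf L, nabla b ∈ sectionOf L ⊔ (sectionOf L).map (zpowMul V (-1))) ↔
      (∀ b ∈ sectionOf L, nabla b ∈
        Submodule.span ℂ {x | ∃ j : ℕ, ∃ c ∈ sectionOf L, x = zpowMul V (-(j : ℤ)) c})) ∧
    ((∀ b ∈ sectionOf L, nabla b ∈ sectionOf L ⊔ (sectionOf L).map (zpowMul V (-1))) ↔
      (∀ l ∈ L, nabla l ∈ L)) :=
  zdz_stability_general hLeib hpos hL.1.codisjoint hL.2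

end
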